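/- Let T be a rooted tree on the vertex set of a flow graph G that has the parent property. Then T has the sibling property — and hence T is the dominator tree of G — if and only if there exists a low-high order of T on G. In particular, the dominator tree of every flow graph admits a low-high order. -/

import Mathlib

variable {V : Type*}

/-- `IsWalk A u v p`: `p` is a path from `u` to `v` in the digraph with arc
relation `A`, listing all of its vertices in order. -/
def IsWalk (A : V → V → Prop) (u v : V) (p : List V) : Prop :=
  p.Chain' A ∧ p.head? = some u ∧ p.getLast? = some v

/-- A flow graph: a directed graph with arc relation `A` and start vertex `s`
such that every vertex is reachable from `s` and no arc enters `s`. -/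
structure FlowGraph (V : Type*) where
  A : V → V → Prop
  s : V
  reach : ∀ v : V, ∃ p : List V, IsWalk A s v p
  no_enter : ∀ v : V, ¬ A v s

/-- `DomOn A s v w`: `v` lies on every path from `s` to `w` in the digraph with
arc relation `A`. -/
def DomOn (A : V → V → Prop) (s v w : V) : Prop :=
  ∀ p : List V, IsWalk A s w p → v ∈ p

/-- `v` dominates `w` in the flow graph `G`. -/
def FlowGraph.Dom (G : FlowGraph V) (v w : V) : Prop :=
  DomOn G.A G.s v w

/-- A rooted tree on vertex set `V`, given by a parent function: the root is a
fixed point of the parent function, and iterating the parent function from any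
vertex eventually reaches the root. -/
structure ParentTree (V : Type*) where
  parent : V → V
  root : V
  parent_root : parent root = root
  reaches_root : ∀ v : V, ∃ n : ℕ, parent^[n] v = root

/-- `T.Anc x y`: `x` is an ancestor of `y` in the rooted tree `T` (every vertex
is an ancestor of itself). -/
def ParentTree.Anc (T : ParentTree V) (x y : V) : Prop :=
  ∃ n : ℕ, T.parent^[n] y = x

/-- `T` has the parent property with respect to `G`: for every arc `(v, w)`,
the parent of `w` is an ancestor of `v` in `T`. -/
def ParentProperty (G : FlowGraph V) (T : ParentTree V) : Prop :=
  ∀ v w : V, G.A v w → T.Anc (T.parent w) v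

/-- The sibling property with respect to an arbitrary arc relation `A` with
start vertex `s`: no non-root vertex dominates a distinct vertex with the same
parent. -/
def SiblingPropertyOn (A : V → V → Prop) (s : V) (T : ParentTree V) : Prop :=
  ∀ v w : V, v ≠ T.root → w ≠ T.root → v ≠ w → T.parent v = T.parent w →
    ¬ DomOn A s v w

/-- `T` has the sibling property with respect to the flow graph `G`. -/
def SiblingProperty (G : FlowGraph V) (T : ParentTree V) : Prop :=
  SiblingPropertyOn G.A G.s T

/-- `T` is the dominator tree of the digraph with arc relation `A` and start
vertex `s`: `T` is rooted at `s`, and the parent of every vertex `v ≠ s` is its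
immediate dominator, i.e. a strict dominator of `v` that is dominated by every
strict dominator of `v`. -/
def IsDomTreeOn (A : V → V → Prop) (s : V) (T : ParentTree V) : Prop :=
  T.root = s ∧ ∀ v : V, v ≠ s →
    DomOn A s (T.parent v) v ∧ T.parent v ≠ v ∧
    ∀ u : V, DomOn A s u v → u ≠ v → DomOn A s u (T.parent v)

/-- `T` is the dominator tree of the flow graph `G`. -/
def IsDomTree (G : FlowGraph V) (T : ParentTree V) : Prop :=
  IsDomTreeOn G.A G.s T

/-- `ord` is (the numbering of) a preorder of the rooted tree `T`: an injective
numbering of the vertices such that for every vertex `v` the descendants of `v`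
are ordered consecutively, with `v` first. -/
def IsTreePreorder (T : ParentTree V) (ord : V → ℕ) : Prop :=
  Function.Injective ord ∧
  (∀ v x : V, T.Anc v x → ord v ≤ ord x) ∧
  (∀ v x y z : V, T.Anc v x → T.Anc v z → ord x ≤ ord y → ord y ≤ ord z →
    T.Anc v y)

/-- A preorder `ord` of `T` is low-high on the digraph with arc relation `A`
and start vertex `s`: for every `v ≠ s`, either `(t(v), v)` is an arc, or there
are arcs `(u, v)` and `(w, v)` with `u < v < w` in the order and `w` not a
descendant of `v` in `T`. -/
def LowHighOn (A : V → V → Prop) (s : V) (T : ParentTree V) (ord : V → ℕ) :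
    Prop :=
  IsTreePreorder T ord ∧
  ∀ v : V, v ≠ s → (A (T.parent v) v ∨
    ∃ u w : V, A u v ∧ A w v ∧ ord u < ord v ∧ ord v < ord w ∧ ¬ T.Anc v w)

/-- A low-high order of `T` on the flow graph `G`. -/
def LowHigh (G : FlowGraph V) (T : ParentTree V) (ord : V → ℕ) : Prop :=
  LowHighOn G.A G.s T ord

/-- `B` is (the arc relation of) a spanning tree of `G` rooted at `s`: a
subgraph of `G` in which no arc enters `s`, every vertex other than `s` has
exactly one entering arc, and every vertex is reachable from `s`. -/
def IsSpanningTree (G : FlowGraph V) (B : V → V → Prop) : Prop :=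
  (∀ u v : V, B u v → G.A u v) ∧
  (∀ v : V, ¬ B v G.s) ∧
  (∀ v : V, v ≠ G.s → ∃! u : V, B u v) ∧
  (∀ v : V, ∃ p : List V, IsWalk B G.s v p)

/-- Spanning trees `B` and `R` of `G` rooted at `s` are independent: for every
vertex `v`, the paths from `s` to `v` in `B` and in `R` have in common only
dominators of `v`. -/
def Independent (G : FlowGraph V) (B R : V → V → Prop) : Prop :=
  ∀ v : V, ∀ p q : List V, IsWalk B G.s v p → IsWalk R G.s v q →
    ∀ x : V, x ∈ p → x ∈ q → G.Dom x v

/-- Spanning trees `B` and `R` of `G` rooted at `s` are strongly independent: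
for every pair of vertices `v`, `w`, either the path from `s` to `v` in `B` and
the path from `s` to `w` in `R` have in common only common dominators of `v`
and `w`, or the same holds with the roles of `B` and `R` exchanged. -/
def StronglyIndependent (G : FlowGraph V) (B R : V → V → Prop) : Prop :=
  ∀ v w : V,
    (∀ p q : List V, IsWalk B G.s v p → IsWalk R G.s w q →
      ∀ x : V, x ∈ p → x ∈ q → G.Dom x v ∧ G.Dom x w) ∨
    (∀ p q : List V, IsWalk R G.s v p → IsWalk B G.s w q →
      ∀ x : V, x ∈ p → x ∈ q → G.Dom x v ∧ G.Dom x w)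

/-- `IsDerivedArcOf G T v b a`: `(a, b)` is the derived arc of the arc `(v, b)`
of `G` with respect to `T`: `b` is not an ancestor of `v` in `T`, and `a = v`
if `v` is the parent of `b`, while otherwise `a` is the sibling of `b` in `T`
that is an ancestor of `v`. -/
def IsDerivedArcOf (G : FlowGraph V) (T : ParentTree V) (v b a : V) : Prop :=
  G.A v b ∧ ¬ T.Anc b v ∧
    ((v = T.parent b ∧ a = v) ∨
     (v ≠ T.parent b ∧ a ≠ T.root ∧ T.parent a = T.parent b ∧ T.Anc a v))

/-- The arc relation of the derived graph of `G` with respect to `T`. -/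
def DerivedArc (G : FlowGraph V) (T : ParentTree V) (a b : V) : Prop :=
  ∃ v : V, IsDerivedArcOf G T v b a

/-- `S` is the vertex set of a strongly connected subgraph of the digraph with
arc relation `A`. -/
def StronglyConnectedSet (A : V → V → Prop) (S : Set V) : Prop :=
  S.Nonempty ∧ ∀ u ∈ S, ∀ v ∈ S, ∃ p : List V,
    IsWalk A u v p ∧ ∀ x ∈ p, x ∈ S

/-- `G` is reducible: every strongly connected subgraph has a single entry
vertex, i.e. a vertex of the subgraph contained in every path from `s` to a
vertex of the subgraph. -/
def Reducible (G : FlowGraph V) : Prop :=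
  ∀ S : Set V, StronglyConnectedSet G.A S →
    ∃ v ∈ S, ∀ u ∈ S, ∀ p : List V, IsWalk G.A G.s u p → v ∈ p

/-- A digraph is acyclic if it has no cycle (a path from a vertex to itself
with at least one arc). -/
def Acyclic (A : V → V → Prop) : Prop :=
  ¬ ∃ (v : V) (p : List V), IsWalk A v v p ∧ 2 ≤ p.length

/-- `IsHighWalk A ν u v p`: `p` is a high path from `u` to `v`: a path all of
whose vertices other than `u` and `v` are greater (in the numbering `ν`) than
both `u` and `v`. -/
def IsHighWalk (A : V → V → Prop) (ν : V → ℕ) (u v : V) (p : List V) : Prop :=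
  IsWalk A u v p ∧ ∀ x ∈ p, x ≠ u → x ≠ v → ν u < ν x ∧ ν v < ν x

/-!
If `T` has the parent property, every arc `(v, b)` of `G` not coming from a descendant of `b` yields
an arc of the derived graph into `b`, from the parent of `b` or from the sibling of `b` above `v`.
The sibling property makes the derived graph *flat* on each family of siblings: no vertex lies on
all paths to another one. Number a family from the bottom up, removing at each step an entry of
the remaining set (a child with an arc from its parent, or the head of an arc from a numbered
vertex) without which everything else remains reachable. Such an entry exists: if `w` is unreachable
without `x`, then `x` and all that is reachable without `x` are reachable without `w`, so an entry
whose removal leaves a maximal reachable set leaves all other entries reachable. Every vertex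
without an arc from its parent now has a lower and a higher predecessor among its siblings, and the
preorder visiting siblings in this order is low-high.

Conversely, given a low-high order, a vertex that is not a descendant of `v` can be reached avoiding
`v`: trace parent and low arcs backwards from a vertex preceding `v`, and parent and high arcs
backwards from a later one.
-/

section Reachability

variable {R : V → V → Prop} {E W W' : Set V} {v w x : V}

/-- `ReachableWithin R E W w`: some path of `R` from a vertex of `E` to `w` has all its vertices,
both ends included, in `W`. Avoiding a vertex `v` is expressed by `W = {v}ᶜ`. -/
inductive ReachableWithin (R : V → V → Prop) (E W : Set V) : V → Prop
  | base {e : V} : e ∈ E → e ∈ W → ReachableWithin R E W e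
  | step {a b : V} : ReachableWithin R E W a → R a b → b ∈ W → ReachableWithin R E W b

namespace ReachableWithin

theorem mem (h : ReachableWithin R E W w) : w ∈ W := by
  cases h <;> assumption

theorem mono (hW : W ⊆ W') (h : ReachableWithin R E W w) : ReachableWithin R E W' w := by
  induction h with
  | base he hw => exact .base he (hW hw)
  | step _ hr hw ih => exact .step ih hr (hW hw)

theorem sdiff_singleton_of_not (hw : ¬ ReachableWithin R E W w) (h : ReachableWithin R E W x) :
    ReachableWithin R E (W \ {w}) x := by
  have ne_of_reachable {y : V} (hy : ReachableWithin R E W y) : y ≠ w := fun e => hw (e ▸ hy)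
  induction h with
  | base he hx => exact .base he ⟨hx, ne_of_reachable (.base he hx)⟩
  | step ha hr hx ih => exact .step ih hr ⟨hx, ne_of_reachable (.step ha hr hx)⟩

theorem sdiff_singleton_or (hne : x ≠ w) (h : ReachableWithin R E W w) :
    ReachableWithin R E (W \ {x}) w ∨ ReachableWithin R E (W \ {w}) x := by
  by_contra! hnot
  obtain ⟨hw, hx⟩ := hnot
  have avoids_w {a : V} (ha : ReachableWithin R E (W \ {x}) a) : ReachableWithin R E (W \ {w}) a :=
    (ha.sdiff_singleton_of_not hw).mono (Set.sdiff_subset_sdiff_left Set.sdiff_subset)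
  suffices ∀ z, ReachableWithin R E W z → ReachableWithin R E (W \ {x}) z from hw (this w h)
  intro z hz
  induction hz with
  | base he hb => exact .base he ⟨hb, fun e => hx (.base (e ▸ he) ⟨e ▸ hb, hne⟩)⟩
  | step _ hr hb ih =>
    exact .step ih hr ⟨hb, fun e => hx (.step (avoids_w ih) (e ▸ hr) ⟨e ▸ hb, hne⟩)⟩

theorem exists_mem_source (h : ReachableWithin R E W w) : ∃ e ∈ E, e ∈ W := by
  induction h with
  | base he hw => exact ⟨_, he, hw⟩
  | step _ _ _ ih => exact ih

end ReachableWithin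

end Reachability

section FlatOrder

variable {R : V → V → Prop} {E U : Set V}

/-- A digraph `R` with source set `E` is flat if every vertex can be reached from the sources, and
can be reached avoiding any given other vertex. For a flow graph with the start vertex deleted and
its successors as sources, this says that the start vertex immediately dominates all others. -/
structure IsFlat (R : V → V → Prop) (E : Set V) : Prop where
  reachable : ∀ w, ReachableWithin R E Set.univ w
  reachable_compl : ∀ v w, v ≠ w → ReachableWithin R E {v}ᶜ w

/-- The vertices of `U` at which a path from the sources `E` can enter `U`. -/
def entrySet (R : V → V → Prop) (E U : Set V) : Set V :=
  {x ∈ U | x ∈ E ∨ ∃ a ∉ U, R a x}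

theorem exists_mem_entrySet_forall_reachableWithin_sdiff [Finite V] (hne : U.Nonempty)
    (hU : ∀ w ∈ U, ReachableWithin R E U w) :
    ∃ x ∈ entrySet R E U, ∀ w ∈ entrySet R E U, w ≠ x → ReachableWithin R E (U \ {x}) w := by
  have entrySet_nonempty : (entrySet R E U).Nonempty := by
    obtain ⟨w, hw⟩ := hne
    obtain ⟨e, heE, heU⟩ := (hU w hw).exists_mem_source
    exact ⟨e, heU, .inl heE⟩
  obtain ⟨x, hx, hmax⟩ := Set.Finite.exists_maximalFor
    (fun x => {y | ReachableWithin R E (U \ {x}) y}) _ (Set.toFinite _) entrySet_nonempty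
  refine ⟨x, hx, fun w hw hwx => ?_⟩
  by_contra hnot
  have x_avoids_w : ReachableWithin R E (U \ {w}) x :=
    ((hU w hw.1).sdiff_singleton_or hwx.symm).resolve_left hnot
  have le : {y | ReachableWithin R E (U \ {x}) y} ⊆ {y | ReachableWithin R E (U \ {w}) y} :=
    fun y hy => (ReachableWithin.sdiff_singleton_of_not hnot hy).mono
      (Set.sdiff_subset_sdiff_left Set.sdiff_subset)
  exact (hmax hw le x_avoids_w).mem.2 rfl

theorem ReachableWithin.sdiff_singleton_of_entrySet {x w : V}
    (hx : ∀ y ∈ entrySet R E U, y ≠ x → ReachableWithin R E (U \ {x}) y)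
    (h : ReachableWithin R E {x}ᶜ w) (hw : w ∈ U) : ReachableWithin R E (U \ {x}) w := by
  induction h with
  | base he hne => exact .base he ⟨hw, hne⟩
  | @step a b _ hr hne ih =>
    by_cases ha : a ∈ U
    · exact .step (ih ha) hr ⟨hw, hne⟩
    · exact hx b ⟨hw, .inr ⟨a, ha, hr⟩⟩ hne

theorem IsFlat.exists_mem_entrySet_sdiff [Finite V] (hflat : IsFlat R E) (hne : U.Nonempty)
    (hU : ∀ w ∈ U, ReachableWithin R E U w) :
    ∃ x ∈ entrySet R E U, ∀ w ∈ U \ {x}, ReachableWithin R E (U \ {x}) w := by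
  obtain ⟨x, hxU, hx⟩ := exists_mem_entrySet_forall_reachableWithin_sdiff hne hU
  exact ⟨x, hxU, fun w hw =>
    (hflat.reachable_compl x w (Ne.symm hw.2)).sdiff_singleton_of_entrySet hx hw.1⟩

theorem exists_injOn_nat_of_forall_exists_sdiff [Finite V] {P : Set V → Prop} {Q : V → Set V → Prop}
    (hstep : ∀ U : Set V, U.Nonempty → P U → ∃ x ∈ U, Q x U ∧ P (U \ {x})) (hU : P U) :
    ∃ f : V → ℕ, Set.InjOn f U ∧
      ∀ x ∈ U, P {y ∈ U | f x ≤ f y} ∧ Q x {y ∈ U | f x ≤ f y} := by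
  classical
  induction U using WellFoundedLT.induction with
  | ind U ih =>
    rcases U.eq_empty_or_nonempty with rfl | hne
    · exact ⟨fun _ => 0, by simp⟩
    obtain ⟨x, hxU, hQ, hP⟩ := hstep U hne hU
    obtain ⟨f, hinj, hf⟩ := ih (U \ {x}) (Set.sdiff_singleton_ssubset.2 hxU) hP
    let g : V → ℕ := fun y => if y = x then 0 else f y + 1
    have g_self : g x = 0 := if_pos rfl
    have g_of_ne {y : V} (hy : y ≠ x) : g y = f y + 1 := if_neg hy
    have upper_self : {z ∈ U | g x ≤ g z} = U := by simp [g_self]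
    have upper_of_ne {y : V} (hy : y ≠ x) : {z ∈ U | g y ≤ g z} = {z ∈ U \ {x} | f y ≤ f z} := by
      ext z
      by_cases hz : z = x
      · simp [hz, g_self, g_of_ne hy]
      · simp [hz, g_of_ne hy, g_of_ne hz]
    refine ⟨g, fun y hy z hz hyz => ?_, fun y hy => ?_⟩
    · by_cases hyx : y = x <;> by_cases hzx : z = x
      · rw [hyx, hzx]
      · simp [hyx, g_self, g_of_ne hzx] at hyz
      · simp [hzx, g_self, g_of_ne hyx] at hyz
      · rw [g_of_ne hyx, g_of_ne hzx, Nat.add_right_cancel_iff] at hyz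
        exact hinj ⟨hy, hyx⟩ ⟨hz, hzx⟩ hyz
    · by_cases hyx : y = x
      · rw [hyx, upper_self]
        exact ⟨hU, hQ⟩
      · rw [upper_of_ne hyx]
        exact hf y ⟨hy, hyx⟩

theorem exists_linearOrder_forall_Ici [Finite V] {P : Set V → Prop} {Q : V → Set V → Prop}
    (hstep : ∀ U : Set V, U.Nonempty → P U → ∃ x ∈ U, Q x U ∧ P (U \ {x})) (huniv : P Set.univ) :
    ∃ _ : LinearOrder V, ∀ x : V, P (Set.Ici x) ∧ Q x (Set.Ici x) := by
  obtain ⟨f, hinj, hf⟩ := exists_injOn_nat_of_forall_exists_sdiff hstep huniv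
  let order := LinearOrder.lift' f (Set.injOn_univ.1 hinj)
  refine ⟨order, fun x => ?_⟩
  have upper_eq : {y ∈ Set.univ | f x ≤ f y} = Set.Ici x := Set.sep_univ
  exact upper_eq ▸ hf x (Set.mem_univ x)

theorem IsFlat.exists_linearOrder [Finite V] (hflat : IsFlat R E) (hirr : ∀ x, ¬ R x x) :
    ∃ _ : LinearOrder V, ∀ x ∉ E, (∃ a < x, R a x) ∧ ∃ c > x, R c x := by
  obtain ⟨inst, hord⟩ := exists_linearOrder_forall_Ici
    (P := fun U => ∀ w ∈ U, ReachableWithin R E U w) (Q := fun x U => x ∈ entrySet R E U)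
    (fun U hne hU => by
      obtain ⟨x, hx, hsdiff⟩ := hflat.exists_mem_entrySet_sdiff hne hU
      exact ⟨x, hx.1, hx, hsdiff⟩)
    (fun w _ => hflat.reachable w)
  refine ⟨inst, fun x hxE => ⟨?_, ?_⟩⟩
  · obtain ⟨a, ha, hr⟩ := (hord x).2.2.resolve_left hxE
    exact ⟨a, not_le.1 ha, hr⟩
  · cases (hord x).1 x Set.self_mem_Ici with
    | base he _ => exact absurd he hxE
    | @step c _ hc hr _ => exact ⟨c, lt_of_le_of_ne hc.mem (fun e => hirr x (e ▸ hr)), hr⟩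

end FlatOrder

namespace ParentTree

variable {T : ParentTree V} {a b p x y z : V}

theorem Anc.refl (T : ParentTree V) (x : V) : T.Anc x x := ⟨0, rfl⟩

theorem anc_parent (T : ParentTree V) (x : V) : T.Anc (T.parent x) x := ⟨1, rfl⟩

theorem Anc.trans (hxy : T.Anc x y) (hyz : T.Anc y z) : T.Anc x z := by
  obtain ⟨n, rfl⟩ := hxy
  obtain ⟨m, rfl⟩ := hyz
  exact ⟨n + m, Function.iterate_add_apply _ _ _ _⟩

theorem Anc.eq_or_anc_parent (h : T.Anc x y) : x = y ∨ T.Anc x (T.parent y) := by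
  obtain ⟨_ | n, rfl⟩ := h
  · exact .inl rfl
  · exact .inr ⟨n, rfl⟩

theorem Anc.eq_root (h : T.Anc x T.root) : x = T.root := by
  obtain ⟨n, rfl⟩ := h
  exact Function.iterate_fixed T.parent_root n

open Classical in
/-- The depth of a vertex: its distance to the root along parents. -/
noncomputable def depth (T : ParentTree V) (x : V) : ℕ := Nat.find (T.reaches_root x)

theorem depth_parent_lt (hx : x ≠ T.root) : T.depth (T.parent x) < T.depth x := by
  classical
  have h : T.depth x = T.depth (T.parent x) + 1 :=
    Nat.find_comp_succ (T.reaches_root x) (T.reaches_root (T.parent x)) hx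
  omega

theorem parent_induction (T : ParentTree V) {P : V → Prop} (root : P T.root)
    (parent : ∀ x, x ≠ T.root → P (T.parent x) → P x) (x : V) : P x := by
  induction h : T.depth x using Nat.strong_induction_on generalizing x with
  | _ n ih =>
    by_cases hx : x = T.root
    · exact hx ▸ root
    · exact parent x hx (ih _ (h ▸ depth_parent_lt hx) _ rfl)

theorem parent_ne (hx : x ≠ T.root) : T.parent x ≠ x :=
  fun h => (depth_parent_lt hx).ne (congrArg T.depth h)

theorem Anc.depth_le (h : T.Anc x y) : T.depth x ≤ T.depth y := by
  induction y using T.parent_induction with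
  | root => rw [h.eq_root]
  | parent y hy ih =>
    rcases h.eq_or_anc_parent with rfl | h
    · rfl
    · exact (ih h).trans (depth_parent_lt hy).le

theorem not_anc_parent (hx : x ≠ T.root) : ¬ T.Anc x (T.parent x) :=
  fun h => (depth_parent_lt hx).not_ge h.depth_le

/-- The children of `p`. The root, which is its own parent in the encoding, is nobody's child. -/
def children (T : ParentTree V) (p : V) : Set V := {c | c ≠ T.root ∧ T.parent c = p}

theorem exists_mem_children_anc (h : T.Anc p z) (hne : p ≠ z) : ∃ c ∈ T.children p, T.Anc c z := by
  induction z using T.parent_induction with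
  | root => exact absurd h.eq_root hne
  | parent z hz ih =>
    by_cases hp : T.parent z = p
    · exact ⟨z, ⟨hz, hp⟩, .refl T z⟩
    · obtain ⟨c, hc, hcz⟩ := ih (h.eq_or_anc_parent.resolve_left hne) (Ne.symm hp)
      exact ⟨c, hc, hcz.trans (T.anc_parent z)⟩

theorem Anc.eq_of_mem_children (h : T.Anc a b) (ha : a ∈ T.children p) (hb : b ∈ T.children p) :
    a = b := by
  by_contra hne
  have h' : T.Anc a (T.parent b) := h.eq_or_anc_parent.resolve_left hne
  rw [hb.2, ← ha.2] at h'
  exact not_anc_parent ha.1 h'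

open Classical in
/-- The tree path from the root (excluded) down to `x` (included). Comparing these paths
lexicographically gives the preorder that visits siblings in increasing order. -/
noncomputable def path (T : ParentTree V) (x : V) : List V :=
  if x = T.root then [] else T.path (T.parent x) ++ [x]
termination_by T.depth x
decreasing_by exact depth_parent_lt ‹_›

theorem path_root (T : ParentTree V) : T.path T.root = [] := by
  rw [path, if_pos rfl]

theorem path_of_ne_root (hx : x ≠ T.root) : T.path x = T.path (T.parent x) ++ [x] := by
  rw [path, if_neg hx]

theorem path_injective (T : ParentTree V) : Function.Injective T.path := by
  intro x y h
  by_cases hx : x = T.root <;> by_cases hy : y = T.root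
  · rw [hx, hy]
  · simp [hx, path_root, path_of_ne_root hy] at h
  · simp [hy, path_root, path_of_ne_root hx] at h
  · rw [path_of_ne_root hx, path_of_ne_root hy] at h
    exact List.singleton_inj.1 (List.append_inj' h rfl).2

theorem anc_iff_path_prefix : T.Anc x y ↔ T.path x <+: T.path y := by
  induction y using T.parent_induction with
  | root =>
    rw [path_root, List.prefix_nil, ← T.path_root, T.path_injective.eq_iff]
    exact ⟨Anc.eq_root, fun h => h ▸ .refl T _⟩
  | parent y hy ih =>
    rw [path_of_ne_root hy, List.prefix_concat_iff, ← path_of_ne_root hy, ← ih,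
      T.path_injective.eq_iff]
    exact ⟨Anc.eq_or_anc_parent, fun h => h.elim (fun e => e ▸ .refl T _)
      (·.trans (T.anc_parent y))⟩

end ParentTree

section Preorder

theorem list_prefix_of_le_of_le {α : Type*} [LinearOrder α] {p x y z : List α} (hx : p <+: x)
    (hz : p <+: z) (hxy : x ≤ y) (hyz : y ≤ z) : p <+: y := by
  induction p generalizing x y z with
  | nil => exact List.nil_prefix
  | cons a p ih =>
    obtain ⟨x, rfl⟩ := hx
    obtain ⟨z, rfl⟩ := hz
    cases y with
    | nil => exact absurd hxy (by simp)
    | cons b y =>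
      rw [List.cons_append, ← not_lt, List.cons_lt_cons_iff, not_or] at hxy hyz
      obtain rfl : a = b := le_antisymm (not_lt.1 hxy.1) (not_lt.1 hyz.1)
      simp only [true_and, not_lt] at hxy hyz
      exact List.cons_prefix_cons.2 ⟨rfl, ih ⟨x, rfl⟩ ⟨z, rfl⟩ hxy.2 hyz.2⟩

theorem exists_nat_lt_iff_lt {α β : Type*} [Finite α] [LinearOrder β] {k : α → β}
    (hk : Function.Injective k) : ∃ f : α → ℕ, ∀ x y, f x < f y ↔ k x < k y := by
  have := Fintype.ofFinite α
  let := LinearOrder.lift' k hk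
  exact ⟨fun x => (Fintype.orderIsoFinOfCardEq α rfl).symm x,
    fun x y => (Fintype.orderIsoFinOfCardEq α rfl).symm.lt_iff_lt⟩

theorem ParentTree.exists_isTreePreorder [Finite V] [LinearOrder V] (T : ParentTree V) :
    ∃ ord : V → ℕ, IsTreePreorder T ord ∧
      ∀ p, ∀ a ∈ T.children p, ∀ b ∈ T.children p, a < b → ord a < ord b := by
  obtain ⟨ord, hlt⟩ := exists_nat_lt_iff_lt T.path_injective
  have hle (x y : V) : ord x ≤ ord y ↔ T.path x ≤ T.path y := by
    rw [← not_lt, ← not_lt, hlt]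
  refine ⟨ord, ⟨fun x y h => ?_, fun v x h => ?_, fun v x y z hx hz hxy hyz => ?_⟩,
    fun p a ha b hb hab => ?_⟩
  · exact T.path_injective (le_antisymm ((hle x y).1 h.le) ((hle y x).1 h.ge))
  · exact (hle v x).2 (not_lt.1 (anc_iff_path_prefix.1 h).le)
  · rw [anc_iff_path_prefix] at hx hz ⊢
    exact list_prefix_of_le_of_le hx hz ((hle x y).1 hxy) ((hle y z).1 hyz)
  · rw [hlt, path_of_ne_root ha.1, path_of_ne_root hb.1, ha.2, hb.2]
    exact List.append_left_lt (List.cons_lt_cons_iff.2 (.inl hab))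

variable {T : ParentTree V} {ord : V → ℕ} {a b v x y : V}

theorem IsTreePreorder.not_anc_of_lt (h : IsTreePreorder T ord) (hvx : ¬ T.Anc v x)
    (hlt : ord v < ord x) (hxy : ord x ≤ ord y) : ¬ T.Anc v y :=
  fun hvy => hvx (h.2.2 v v x y (.refl T v) hvy hlt.le hxy)

theorem IsTreePreorder.lt_of_anc (h : IsTreePreorder T ord) (hab : ¬ T.Anc a b)
    (hlt : ord a < ord b) (hax : T.Anc a x) (hby : T.Anc b y) : ord x < ord y := by
  have hxb : ord x < ord b := not_le.1 fun hbx => h.not_anc_of_lt hab hlt hbx hax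
  exact hxb.trans_le (h.2.1 b y hby)

end Preorder

section Dominators

variable {A : V → V → Prop} {s v w : V} {W : Set V}

theorem reachableWithin_iff_exists_isWalk :
    ReachableWithin A {s} W w ↔ ∃ p, IsWalk A s w p ∧ ∀ x ∈ p, x ∈ W := by
  constructor
  · intro h
    induction h with
    | @base e he hw => exact ⟨[e], ⟨List.isChain_singleton e, congrArg some he, rfl⟩, by simpa⟩
    | @step a b _ hr hb ih =>
      obtain ⟨p, ⟨hchain, hhead, hlast⟩, hp⟩ := ih
      refine ⟨p ++ [b], ⟨List.isChain_append.2 ⟨hchain, List.isChain_singleton b, ?_⟩, ?_, ?_⟩, ?_⟩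
      · simpa [hlast] using hr
      · simp [List.head?_append, hhead]
      · simp
      · simpa [or_imp, forall_and] using ⟨hp, hb⟩
  · rintro ⟨p, ⟨hchain, hhead, hlast⟩, hp⟩
    have hchainW : p.IsChain (fun a b => A a b ∧ b ∈ W) :=
      hchain.imp_of_mem_imp fun _ b _ hb hr => ⟨hr, hp b hb⟩
    refine hchainW.induction (ReachableWithin A {s} W) p (fun _ _ hr ha => .step ha hr.1 hr.2)
      (fun hne => .base ?_ (hp _ (List.head_mem hne))) w (List.mem_of_getLast? hlast)
    exact Option.some.inj ((List.head?_eq_some_head hne).symm.trans hhead)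

theorem not_domOn_iff : ¬ DomOn A s v w ↔ ReachableWithin A {s} {v}ᶜ w := by
  simp only [reachableWithin_iff_exists_isWalk, DomOn, Set.mem_compl_singleton_iff,
    not_forall, exists_prop]
  exact exists_congr fun p => and_congr_right fun _ =>
    ⟨fun hv x hx e => hv (e ▸ hx), fun hp hv => hp v hv rfl⟩

theorem DomOn.of_arc (h : DomOn A s v w) (hvw : v ≠ w) {u : V} (hu : A u w) : DomOn A s v u := by
  by_contra hnot
  exact not_domOn_iff.2 (.step (not_domOn_iff.1 hnot) hu hvw.symm) h

theorem FlowGraph.reachableWithin_univ (G : FlowGraph V) (w : V) :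
    ReachableWithin G.A {G.s} Set.univ w := by
  obtain ⟨p, hp⟩ := G.reach w
  exact reachableWithin_iff_exists_isWalk.2 ⟨p, hp, fun x _ => Set.mem_univ x⟩

theorem FlowGraph.Dom.antisymm {G : FlowGraph V} (hvw : G.Dom v w) (hwv : G.Dom w v) : v = w := by
  by_contra hne
  have h := (G.reachableWithin_univ w).sdiff_singleton_or hne
  rw [← Set.compl_eq_univ_sdiff, ← Set.compl_eq_univ_sdiff, ← not_domOn_iff, ← not_domOn_iff] at h
  exact h.elim (· hvw) (· hwv)

theorem FlowGraph.Dom.eq_start {G : FlowGraph V} (h : G.Dom v G.s) : v = G.s :=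
  List.mem_singleton.1 (h [G.s] ⟨List.isChain_singleton _, rfl, rfl⟩)

namespace IsDomTree

variable {G : FlowGraph V} {D : ParentTree V}

theorem anc_of_dom (hD : IsDomTree G D) (h : G.Dom v w) : D.Anc v w := by
  induction w using D.parent_induction with
  | root =>
    rw [hD.1] at h ⊢
    exact h.eq_start ▸ .refl D v
  | parent w hw ih =>
    by_cases hvw : v = w
    · exact hvw ▸ .refl D v
    · exact (ih ((hD.2 w (hD.1 ▸ hw)).2.2 v h hvw)).trans (D.anc_parent w)

theorem parentProperty (hD : IsDomTree G D) : ParentProperty G D := by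
  intro v w hvw
  have hw : w ≠ G.s := by
    rintro rfl
    exact G.no_enter v hvw
  obtain ⟨hdom, hne, -⟩ := hD.2 w hw
  exact hD.anc_of_dom (hdom.of_arc hne hvw)

theorem siblingProperty (hD : IsDomTree G D) : SiblingProperty G D := by
  intro v w hv hw hvw hpar hdom
  have hdom_parent : G.Dom v (D.parent v) := hpar ▸ (hD.2 w (hD.1 ▸ hw)).2.2 v hdom hvw
  obtain ⟨hparent_dom, hne, -⟩ := hD.2 v (hD.1 ▸ hv)
  exact hne (FlowGraph.Dom.antisymm hparent_dom hdom_parent)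

end IsDomTree

end Dominators

section LowHighOfSibling

variable {G : FlowGraph V} {T : ParentTree V} {a b c p z : V} {W : Set V}

/-- The vertices exempt from the two-arc condition of a low-high order; they are the sources from
which the derived graph on each family of siblings is entered. -/
def derivedSources (G : FlowGraph V) (T : ParentTree V) : Set V :=
  {b | b = T.root ∨ G.A (T.parent b) b}

theorem not_derivedArc_self (hroot : T.root = G.s) : ¬ DerivedArc G T a a := by
  rintro ⟨v, hva, hanc, ⟨rfl, ha⟩ | ⟨-, -, -, hav⟩⟩
  · have ha_root : a = T.root := by
      by_contra hne
      exact ParentTree.parent_ne hne ha.symm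
    rw [ha_root, hroot] at hva
    exact G.no_enter _ hva
  · exact hanc hav

theorem DerivedArc.exists_arc_of_notMem_derivedSources (h : DerivedArc G T a b)
    (hb : b ∉ derivedSources G T) :
    ∃ u, G.A u b ∧ ¬ T.Anc b u ∧ T.Anc a u ∧ a ∈ T.children (T.parent b) := by
  obtain ⟨u, hub, hbu, ⟨rfl, -⟩ | ⟨-, ha, hpar, hau⟩⟩ := h
  · exact absurd (.inr hub) hb
  · exact ⟨u, hub, hbu, hau, ha, hpar⟩

theorem ReachableWithin.derived (hroot : T.root = G.s) (hpp : ParentProperty G T)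
    (hz : ReachableWithin G.A {G.s} W z) (hc : c ∈ T.children p) (hcz : T.Anc c z) :
    ReachableWithin (DerivedArc G T) (derivedSources G T) (W ∩ T.children p) c := by
  induction hz generalizing c with
  | base he _ =>
    obtain rfl : _ = G.s := he
    rw [← hroot] at hcz
    exact absurd hcz.eq_root hc.1
  | @step z z' _ harc hz' ih =>
    have hpar : T.Anc (T.parent z') z := hpp z z' harc
    rcases hcz.eq_or_anc_parent with rfl | hcz
    · by_cases hzp : p = z
      · exact .base (.inr (by rwa [hc.2, hzp])) ⟨hz', hc⟩
      rw [hc.2] at hpar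
      obtain ⟨c', hc', hc'z⟩ := ParentTree.exists_mem_children_anc hpar hzp
      by_cases hcz : T.Anc c z
      · exact ih hc hcz
      have hderived : DerivedArc G T c' c :=
        ⟨z, harc, hcz, .inr ⟨hc.2 ▸ Ne.symm hzp, hc'.1, hc'.2.trans hc.2.symm, hc'z⟩⟩
      exact .step (ih hc' hc'z) hderived ⟨hz', hc⟩
    · exact ih hc (hcz.trans hpar)

theorem SiblingProperty.isFlat (hsp : SiblingProperty G T) (hroot : T.root = G.s)
    (hpp : ParentProperty G T) : IsFlat (DerivedArc G T) (derivedSources G T) := by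
  have derived {W : Set V} {w : V} (hw : w ≠ T.root) (h : ReachableWithin G.A {G.s} W w) :
      ReachableWithin (DerivedArc G T) (derivedSources G T) (W ∩ T.children (T.parent w)) w :=
    h.derived hroot hpp ⟨hw, rfl⟩ (.refl T w)
  refine ⟨fun w => ?_, fun v w hvw => ?_⟩
  · by_cases hw : w = T.root
    · exact .base (.inl hw) (Set.mem_univ w)
    · exact (derived hw (G.reachableWithin_univ w)).mono (Set.subset_univ _)
  · by_cases hw : w = T.root
    · exact .base (.inl hw) hvw.symm
    by_cases hv : v ∈ T.children (T.parent w)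
    · exact (derived hw (not_domOn_iff.1 (hsp v w hv.1 hw hvw hv.2))).mono Set.inter_subset_left
    · exact (derived hw (G.reachableWithin_univ w)).mono
        fun x hx hxv => hv (hxv ▸ hx.2)

theorem SiblingProperty.exists_lowHigh [Finite V] (hsp : SiblingProperty G T)
    (hroot : T.root = G.s) (hpp : ParentProperty G T) : ∃ ord : V → ℕ, LowHigh G T ord := by
  obtain ⟨_, hflat⟩ :=
    (hsp.isFlat hroot hpp).exists_linearOrder (fun _ => not_derivedArc_self hroot)
  obtain ⟨ord, hpre, hord⟩ := T.exists_isTreePreorder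
  refine ⟨ord, hpre, fun v hv => or_iff_not_imp_left.2 fun hparent => ?_⟩
  have hv_root : v ≠ T.root := hroot ▸ hv
  have hv_child : v ∈ T.children (T.parent v) := ⟨hv_root, rfl⟩
  have hv_source : v ∉ derivedSources G T := not_or.2 ⟨hv_root, hparent⟩
  obtain ⟨⟨a, hav, ha⟩, ⟨c, hvc, hc⟩⟩ := hflat v hv_source
  obtain ⟨u, huv, -, hau, ha_child⟩ := ha.exists_arc_of_notMem_derivedSources hv_source
  obtain ⟨w, hwv, hvw, hcw, hc_child⟩ := hc.exists_arc_of_notMem_derivedSources hv_source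
  have hu : ord u < ord v := hpre.lt_of_anc
    (fun h => hav.ne (h.eq_of_mem_children ha_child hv_child))
    (hord _ a ha_child v hv_child hav) hau (.refl T v)
  have hw : ord v < ord w := hpre.lt_of_anc (fun h => hvw (h.trans hcw))
    (hord _ v hv_child c hc_child hvc) (.refl T v) hcw
  exact ⟨u, w, huv, hwv, hu, hw, hvw⟩

end LowHighOfSibling

namespace LowHigh

variable {G : FlowGraph V} {T : ParentTree V} {ord : V → ℕ} {v x : V}

theorem reachableWithin_le (h : LowHigh G T ord) (hroot : T.root = G.s) (x : V) :
    ReachableWithin G.A {G.s} {y | ord y ≤ ord x} x := by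
  induction hn : ord x using Nat.strong_induction_on generalizing x with
  | _ n ih =>
    subst hn
    by_cases hx : x = G.s
    · exact .base hx (le_refl (ord x))
    obtain ⟨u, hux, hlt⟩ : ∃ u, G.A u x ∧ ord u < ord x := by
      rcases h.2 x hx with harc | ⟨u, -, hux, -, hlt, -, -⟩
      · have hne : ord (T.parent x) ≠ ord x :=
          h.1.1.ne (ParentTree.parent_ne (hroot ▸ hx))
        exact ⟨_, harc, (h.1.2.1 _ _ (T.anc_parent x)).lt_of_ne hne⟩
      · exact ⟨u, hux, hlt⟩
    exact .step ((ih _ hlt u rfl).mono fun y hy => le_trans hy hlt.le) hux (le_refl (ord x))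

theorem reachableWithin_compl_of_not_anc [Finite V] (h : LowHigh G T ord) (hroot : T.root = G.s)
    (hx : ¬ T.Anc v x) : ReachableWithin G.A {G.s} {v}ᶜ x := by
  have wf : WellFounded (ord ⁻¹'o (· > ·)) := Finite.wellFounded_of_trans_of_irrefl _
  induction x using wf.induction with
  | _ x higher =>
    -- Tracing parent arcs back from `x` decreases `ord`, but a high arc into an ancestor `y` of `x`
    -- leaves from beyond the descendants of `y`, hence from beyond `x`.
    suffices ∀ y, T.Anc y x → ¬ T.Anc v y → ReachableWithin G.A {G.s} {v}ᶜ y from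
      this x (.refl T x) hx
    intro y hyx hvy
    induction y using T.parent_induction with
    | root => exact .base hroot fun e => hvy (e ▸ .refl T _)
    | parent y hy ih =>
      have hyv : y ≠ v := fun e => hvy (e ▸ .refl T y)
      rcases lt_or_gt_of_ne (h.1.1.ne hyv) with hlt | hgt
      · exact (h.reachableWithin_le hroot y).mono fun z hz e => hlt.not_ge (e ▸ hz)
      rcases h.2 y (hroot ▸ hy) with harc | ⟨-, w, -, hwy, -, hyw, hnot⟩
      · exact .step (ih ((T.anc_parent y).trans hyx) fun e => hvy (e.trans (T.anc_parent y)))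
          harc hyv
      · have hxw : ord x < ord w :=
          not_le.1 fun hwx => h.1.not_anc_of_lt hnot hyw hwx hyx
        exact .step (higher w hxw (h.1.not_anc_of_lt hvy hgt hyw.le)) hwy hyv

theorem siblingProperty [Finite V] (h : LowHigh G T ord) (hroot : T.root = G.s) :
    SiblingProperty G T := by
  intro v w hv hw hvw hpar
  have hnot : ¬ T.Anc v w := fun hanc => hvw (hanc.eq_of_mem_children ⟨hv, hpar⟩ ⟨hw, rfl⟩)
  exact not_domOn_iff.2 (h.reachableWithin_compl_of_not_anc hroot hnot)

end LowHigh

/-- A rooted tree with the parent property has the sibling property — and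
hence is the dominator tree of `G` — if and only if it has a low-high order on
`G`. In particular the dominator tree of every flow graph admits a low-high
order. -/
theorem stmt16 [Fintype V] (G : FlowGraph V) :
    (∀ T : ParentTree V, T.root = G.s → ParentProperty G T →
      (SiblingProperty G T ↔ ∃ ord : V → ℕ, LowHigh G T ord)) ∧
    (∀ D : ParentTree V, IsDomTree G D → ∃ ord : V → ℕ, LowHigh G D ord) := by
  refine ⟨fun T hroot hpp => ⟨fun hsp => hsp.exists_lowHigh hroot hpp, ?_⟩, fun D hD => ?_⟩
  · rintro ⟨ord, hord⟩
    exact hord.siblingProperty hroot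
  · exact hD.siblingProperty.exists_lowHigh hD.1 hD.parentProperty
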